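/- arXiv:1605.06985 — 2 statements merged into one kernel-verified Lean document; each statement's English description precedes it below -/
import Mathlib

section
/- Let D > 0, let F : [0, D) → ℝ be C³ with F(0) = 0, F'(0) = 0, and F'(t), F''(t), F'''(t), and (F(t)/t)' all nonnegative on (0, D), and let r : ℂ² → ℝ be convex and Fréchet-differentiable. Define ρ(z) = F(|z₁|²) + r(z) for |z₁|² < D, and fix d with d² < D. Then for each k ∈ {1, 2} there is a constant c > 0 such that: for all ζ, z ∈ ℂ² with |ζ₁| ≤ d, |z₁| ≤ d, ρ(ζ) − ρ(z) ≥ 0, and |ζ₁| ≥ |z₁ − ζ₁|, one has |Φ(ζ,z)|^k · |z − ζ| ≥ c·[ |Im Φ(ζ,z)| + ρ(ζ) − ρ(z) + F(|z₁ − ζ₁|²) ]^k · |z₁ − ζ₁|. -/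
open Complex Set

/-- The Wirtinger derivative `∂g/∂z₁` of a real-valued function `g` on `ℂ²`. -/
noncomputable def wirt1 (g : ℂ × ℂ → ℝ) (ζ : ℂ × ℂ) : ℂ :=
  (1 / 2 : ℂ) * (((fderiv ℝ g ζ) (1, 0) : ℝ) - Complex.I * ((fderiv ℝ g ζ) (Complex.I, 0) : ℝ))

/-- The Wirtinger derivative `∂g/∂z₂`. -/
noncomputable def wirt2 (g : ℂ × ℂ → ℝ) (ζ : ℂ × ℂ) : ℂ :=
  (1 / 2 : ℂ) * (((fderiv ℝ g ζ) (0, 1) : ℝ) - Complex.I * ((fderiv ℝ g ζ) (0, Complex.I) : ℝ))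

/-- The support function `Φ(ζ,z) = Σ_{j=1}^{2} (∂g/∂ζ_j)(ζ)·(ζ_j − z_j)`. -/
noncomputable def suppFn (g : ℂ × ℂ → ℝ) (ζ z : ℂ × ℂ) : ℂ :=
  wirt1 g ζ * (ζ.1 - z.1) + wirt2 g ζ * (ζ.2 - z.2)

/-- The Euclidean norm on `ℂ²`. -/
noncomputable def eNorm (w : ℂ × ℂ) : ℝ :=
  Real.sqrt (‖w.1‖ ^ 2 + ‖w.2‖ ^ 2)

/-!
Write `a = |ζ₁|²`, `b = |z₁|²` and `s = |z₁ - ζ₁|²`. Since `2 Re Φ(ζ, z) = dρ_ζ(ζ - z)` and, by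
polarization, the differential of `|ζ₁|²` applied to `ζ - z` is `(a - b) + s`,
`2 Re Φ(ζ, z) = F'(a) (a - b) + F'(a) s + dr_ζ(ζ - z)`. By convexity of `F` and `r` the outer terms
are at least `F(a) - F(b)` and `r(ζ) - r(z)`; as `F(0) = 0` and `s ≤ a`, the middle one is at least
`F(s)`, because `F(s) / s ≤ F(a) / a ≤ F'(a)`. Hence `ρ(ζ) - ρ(z) + F(s) ≤ 2 Re Φ(ζ, z)`, the
bracket is at most `3 |Φ(ζ, z)|`, and `c = 3⁻ᵏ` works.
-/

section Convexity

lemma convexOn_sub_le_hasFDerivAt {E : Type*} [NormedAddCommGroup E] [NormedSpace ℝ E]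
    {S : Set E} {f : E → ℝ} {f' : E →L[ℝ] ℝ} {x y : E} (hf : ConvexOn ℝ S f) (hx : x ∈ S)
    (hy : y ∈ S) (hf' : HasFDerivAt f f' x) : f x - f y ≤ f' (x - y) := by
  let line : ℝ →ᵃ[ℝ] E := AffineMap.lineMap x y
  have hline0 : line 0 = x := AffineMap.lineMap_apply_zero x y
  have hline1 : line 1 = y := AffineMap.lineMap_apply_one x y
  have hderiv : HasDerivAt (f ∘ line) (f' (y - x)) 0 :=
    HasFDerivAt.comp_hasDerivAt 0 (hline0.symm ▸ hf') AffineMap.hasDerivAt_lineMap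
  have hslope := (hf.comp_affineMap line).le_slope_of_hasDerivAt
    (x := 0) (y := 1) (by simpa [hline0]) (by simpa [hline1]) one_pos hderiv
  rw [slope_def_field, sub_zero, div_one, Function.comp_apply, Function.comp_apply, hline0,
    hline1, map_sub] at hslope
  rw [map_sub]
  linarith

variable {S : Set ℝ} {f : ℝ → ℝ} {f' a b s : ℝ}

lemma monotoneOn_of_hasDerivWithinAt_self_nonneg {f' : ℝ → ℝ} (hS : Convex ℝ S)
    (hf' : ∀ x ∈ S, HasDerivWithinAt f (f' x) S x) (hf'_nonneg : ∀ x ∈ interior S, 0 ≤ f' x) :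
    MonotoneOn f S :=
  monotoneOn_of_hasDerivWithinAt_nonneg hS (fun x hx ↦ (hf' x hx).continuousWithinAt)
    (fun x hx ↦ (hf' x (interior_subset hx)).mono interior_subset) hf'_nonneg

lemma convexOn_of_hasDerivWithinAt2_self_nonneg {f' f'' : ℝ → ℝ} (hS : Convex ℝ S)
    (hf' : ∀ x ∈ S, HasDerivWithinAt f (f' x) S x)
    (hf'' : ∀ x ∈ S, HasDerivWithinAt f' (f'' x) S x)
    (hf''_nonneg : ∀ x ∈ interior S, 0 ≤ f'' x) : ConvexOn ℝ S f :=
  convexOn_of_hasDerivWithinAt2_nonneg hS (fun x hx ↦ (hf' x hx).continuousWithinAt)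
    (fun x hx ↦ (hf' x (interior_subset hx)).mono interior_subset)
    (fun x hx ↦ (hf'' x (interior_subset hx)).mono interior_subset) hf''_nonneg

lemma convexOn_le_deriv_mul_of_map_zero (hf : ConvexOn ℝ S f) (h0 : (0 : ℝ) ∈ S) (hf0 : f 0 = 0)
    (ha : a ∈ S) (hf' : HasDerivAt f f' a) (hs : 0 ≤ s) (hsa : s ≤ a) : f s ≤ f' * s := by
  obtain rfl | hs_pos := hs.eq_or_lt
  · simp [hf0]
  have ha_pos : 0 < a := hs_pos.trans_le hsa
  have hsS : s ∈ S := hf.1.ordConnected.out h0 ha ⟨hs, hsa⟩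
  have hslope : f s / s ≤ f' := calc
    f s / s = slope f 0 s := by simp [slope_def_field, hf0]
    _ ≤ slope f 0 a := hf.slope_mono h0 ⟨hsS, hs_pos.ne'⟩ ⟨ha, ha_pos.ne'⟩ hsa
    _ ≤ f' := hf.slope_le_of_hasDerivAt h0 ha ha_pos hf'
  exact (div_le_iff₀ hs_pos).1 hslope

lemma convexOn_sub_add_le_deriv_mul (hf : ConvexOn ℝ S f) (h0 : (0 : ℝ) ∈ S) (hf0 : f 0 = 0)
    (ha : a ∈ S) (hb : b ∈ S) (hf' : HasDerivAt f f' a) (hs : 0 ≤ s) (hsa : s ≤ a) :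
    f a - f b + f s ≤ f' * (a - b + s) := by
  have htangent := convexOn_sub_le_hasFDerivAt hf ha hb hf'.hasFDerivAt
  have hray := convexOn_le_deriv_mul_of_map_zero hf h0 hf0 ha hf' hs hsa
  rw [ContinuousLinearMap.toSpanSingleton_apply, smul_eq_mul] at htangent
  linarith

end Convexity

section Radial

variable {E G : Type*} [NormedAddCommGroup E] [InnerProductSpace ℝ E] [NormedAddCommGroup G]
  [NormedSpace ℝ G] {D f' : ℝ} {F : ℝ → ℝ} {r ρ : E × G → ℝ} {ζ z : E × G}

lemma two_mul_inner_self_sub (x y : E) :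
    2 * inner ℝ x (x - y) = ‖x‖ ^ 2 - ‖y‖ ^ 2 + ‖y - x‖ ^ 2 := by
  rw [norm_sub_sq_real, inner_sub_right, real_inner_self_eq_norm_sq, real_inner_comm]
  ring

lemma fderiv_radial_add_apply (hρ : ∀ z : E × G, ‖z.1‖ ^ 2 < D → ρ z = F (‖z.1‖ ^ 2) + r z)
    (hζ : ‖ζ.1‖ ^ 2 < D) (hF : HasDerivAt F f' (‖ζ.1‖ ^ 2)) (hr : DifferentiableAt ℝ r ζ)
    (v : E × G) :
    fderiv ℝ ρ ζ v = f' * (2 * inner ℝ ζ.1 v.1) + fderiv ℝ r ζ v := by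
  have hnorm_sq : HasFDerivAt (fun z : E × G ↦ ‖z.1‖ ^ 2) _ ζ := hasFDerivAt_fst.norm_sq
  have hsum := (hF.comp_hasFDerivAt ζ hnorm_sq).add hr.hasFDerivAt
  have hdom : ∀ᶠ z : E × G in nhds ζ, ‖z.1‖ ^ 2 < D :=
    (continuous_fst.norm.pow 2).continuousAt.eventually_lt_const hζ
  rw [(hsum.congr_of_eventuallyEq (hdom.mono hρ)).fderiv]
  simp

lemma sub_add_le_fderiv_radial_add (hFconv : ConvexOn ℝ (Ico 0 D) F) (hF0 : F 0 = 0)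
    (hrconv : ConvexOn ℝ univ r)
    (hρ : ∀ z : E × G, ‖z.1‖ ^ 2 < D → ρ z = F (‖z.1‖ ^ 2) + r z)
    (hζ : ‖ζ.1‖ ^ 2 < D) (hz : ‖z.1‖ ^ 2 < D) (hF : DifferentiableAt ℝ F (‖ζ.1‖ ^ 2))
    (hr : DifferentiableAt ℝ r ζ) (hle : ‖z.1 - ζ.1‖ ≤ ‖ζ.1‖) :
    ρ ζ - ρ z + F (‖z.1 - ζ.1‖ ^ 2) ≤ fderiv ℝ ρ ζ (ζ - z) := by
  have hFbound := convexOn_sub_add_le_deriv_mul hFconv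
    ⟨le_rfl, (sq_nonneg _).trans_lt hζ⟩ hF0 ⟨sq_nonneg _, hζ⟩ ⟨sq_nonneg _, hz⟩ hF.hasDerivAt
    (sq_nonneg _) (pow_le_pow_left₀ (norm_nonneg _) hle 2)
  have hrbound := convexOn_sub_le_hasFDerivAt hrconv (mem_univ ζ) (mem_univ z) hr.hasFDerivAt
  rw [fderiv_radial_add_apply hρ hζ hF.hasDerivAt hr, Prod.fst_sub, two_mul_inner_self_sub,
    hρ ζ hζ, hρ z hz]
  linarith

end Radial

lemma two_mul_re_suppFn (g : ℂ × ℂ → ℝ) (ζ z : ℂ × ℂ) :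
    2 * (suppFn g ζ z).re = fderiv ℝ g ζ (ζ - z) := by
  have hbasis (w : ℂ × ℂ) : w = w.1.re • ((1, 0) : ℂ × ℂ) + w.1.im • ((I, 0) : ℂ × ℂ)
      + w.2.re • ((0, 1) : ℂ × ℂ) + w.2.im • ((0, I) : ℂ × ℂ) := by
    apply Prod.ext <;> apply Complex.ext <;> simp
  have hterm (p q : ℝ) (w : ℂ) : 2 * ((1 / 2 : ℂ) * (p - I * q) * w).re = p * w.re + q * w.im := by
    have hhalf : (1 / 2 : ℂ) * (p - I * q) * w = ((1 / 2 : ℝ) : ℂ) * ((p - I * q) * w) := by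
      push_cast
      ring
    rw [hhalf, re_ofReal_mul]
    simp
  rw [hbasis (ζ - z), suppFn, wirt1, wirt2, add_re, mul_add, hterm, hterm]
  simp only [map_add, map_smul, smul_eq_mul, Prod.fst_sub, Prod.snd_sub, mul_comm, add_assoc]

lemma norm_fst_le_eNorm (w : ℂ × ℂ) : ‖w.1‖ ≤ eNorm w :=
  Real.le_sqrt_of_sq_le (le_add_of_nonneg_right (sq_nonneg _))

lemma abs_im_add_two_mul_re_le (w : ℂ) : |w.im| + 2 * w.re ≤ 3 * ‖w‖ := by
  linarith [abs_im_le_norm w, re_le_norm w]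

theorem stmt5_general {D : ℝ} {F : ℝ → ℝ} (hFconv : ConvexOn ℝ (Ico 0 D) F)
    (hFmono : MonotoneOn F (Ico 0 D)) (hFdiff : DifferentiableOn ℝ F (Ioo 0 D)) (hF0 : F 0 = 0)
    {r : ℂ × ℂ → ℝ} (hconv : ConvexOn ℝ univ r) (hdiff : Differentiable ℝ r)
    {ρ : ℂ × ℂ → ℝ} (hρ : ∀ z : ℂ × ℂ, ‖z.1‖ ^ 2 < D → ρ z = F (‖z.1‖ ^ 2) + r z)
    (k : ℕ) {ζ z : ℂ × ℂ} (hζ : ‖ζ.1‖ ^ 2 < D) (hz : ‖z.1‖ ^ 2 < D) (hpos : 0 ≤ ρ ζ - ρ z)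
    (hle : ‖z.1 - ζ.1‖ ≤ ‖ζ.1‖) :
    (1 / 3) ^ k * (|(suppFn ρ ζ z).im| + ρ ζ - ρ z + F (‖z.1 - ζ.1‖ ^ 2)) ^ k * ‖z.1 - ζ.1‖ ≤
      ‖suppFn ρ ζ z‖ ^ k * eNorm (z - ζ) := by
  have hnorm : ‖z.1 - ζ.1‖ ≤ eNorm (z - ζ) := norm_fst_le_eNorm (z - ζ)
  obtain heq | hne := (norm_nonneg (z.1 - ζ.1)).eq_or_lt
  · rw [← heq] at hnorm ⊢
    rw [mul_zero]
    positivity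
  have hsq_le : ‖z.1 - ζ.1‖ ^ 2 ≤ ‖ζ.1‖ ^ 2 := pow_le_pow_left₀ hne.le hle 2
  have hζ_pos : 0 < ‖ζ.1‖ ^ 2 := (pow_pos hne 2).trans_le hsq_le
  have hre : ρ ζ - ρ z + F (‖z.1 - ζ.1‖ ^ 2) ≤ 2 * (suppFn ρ ζ z).re := by
    rw [two_mul_re_suppFn]
    exact sub_add_le_fderiv_radial_add hFconv hF0 hconv hρ hζ hz
      (hFdiff.differentiableAt (Ioo_mem_nhds hζ_pos hζ)) (hdiff ζ) hle
  have hF_nonneg : 0 ≤ F (‖z.1 - ζ.1‖ ^ 2) :=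
    hF0 ▸ hFmono ⟨le_rfl, hζ_pos.trans hζ⟩ ⟨sq_nonneg _, hsq_le.trans_lt hζ⟩ (sq_nonneg _)
  have hbracket_nonneg :
      0 ≤ 1 / 3 * (|(suppFn ρ ζ z).im| + ρ ζ - ρ z + F (‖z.1 - ζ.1‖ ^ 2)) := by
    linarith [abs_nonneg (suppFn ρ ζ z).im]
  have hbracket_le :
      1 / 3 * (|(suppFn ρ ζ z).im| + ρ ζ - ρ z + F (‖z.1 - ζ.1‖ ^ 2)) ≤ ‖suppFn ρ ζ z‖ := by
    linarith [abs_im_add_two_mul_re_le (suppFn ρ ζ z)]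
  rw [← mul_pow]
  exact mul_le_mul (pow_le_pow_left₀ hbracket_nonneg hbracket_le k) hnorm hne.le (by positivity)

/-- Lemma 2.2, first case: lower bound for the support function of
`ρ(z) = F(|z₁|²) + r(z)` when `|ζ₁| ≥ |z₁ − ζ₁|`. -/
theorem stmt5 (D : ℝ) (hD : 0 < D) (F F' F'' F''' : ℝ → ℝ)
    (hF : ContDiffOn ℝ 3 F (Set.Ico 0 D))
    (hF' : ∀ t ∈ Set.Ico 0 D, HasDerivWithinAt F (F' t) (Set.Ico 0 D) t)
    (hF'' : ∀ t ∈ Set.Ico 0 D, HasDerivWithinAt F' (F'' t) (Set.Ico 0 D) t)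
    (hF''' : ∀ t ∈ Set.Ico 0 D, HasDerivWithinAt F'' (F''' t) (Set.Ico 0 D) t)
    (hF0 : F 0 = 0) (hF'0 : F' 0 = 0)
    (hF'pos : ∀ t ∈ Set.Ioo 0 D, 0 ≤ F' t)
    (hF''pos : ∀ t ∈ Set.Ioo 0 D, 0 ≤ F'' t)
    (hF'''pos : ∀ t ∈ Set.Ioo 0 D, 0 ≤ F''' t)
    (hquot : ∀ t ∈ Set.Ioo 0 D, 0 ≤ deriv (fun s => F s / s) t)
    (r : ℂ × ℂ → ℝ) (hconv : ConvexOn ℝ Set.univ r) (hdiff : Differentiable ℝ r)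
    (ρ : ℂ × ℂ → ℝ)
    (hρ : ∀ z : ℂ × ℂ, ‖z.1‖ ^ 2 < D → ρ z = F (‖z.1‖ ^ 2) + r z)
    (d : ℝ) (hd : d ^ 2 < D) (k : ℕ) (hk : k = 1 ∨ k = 2) :
    ∃ c > (0 : ℝ), ∀ ζ z : ℂ × ℂ,
      ‖ζ.1‖ ≤ d → ‖z.1‖ ≤ d → 0 ≤ ρ ζ - ρ z →
      ‖z.1 - ζ.1‖ ≤ ‖ζ.1‖ →
      ‖suppFn ρ ζ z‖ ^ k * eNorm (z - ζ) ≥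
        c * (|(suppFn ρ ζ z).im| + ρ ζ - ρ z + F (‖z.1 - ζ.1‖ ^ 2)) ^ k *
          ‖z.1 - ζ.1‖ := by
  exact ⟨(1 / 3) ^ k, by positivity, fun ζ z hζ hz ↦ stmt5_general
    (convexOn_of_hasDerivWithinAt2_self_nonneg (convex_Ico 0 D) hF' hF'' (by rwa [interior_Ico]))
    (monotoneOn_of_hasDerivWithinAt_self_nonneg (convex_Ico 0 D) hF' (by rwa [interior_Ico]))
    ((hF.differentiableOn (by norm_num)).mono Ioo_subset_Ico_self) hF0 hconv hdiff hρ k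
    ((pow_le_pow_left₀ (norm_nonneg ζ.1) hζ 2).trans_lt hd)
    ((pow_le_pow_left₀ (norm_nonneg z.1) hz 2).trans_lt hd)⟩
end

section
/- Let Ω ⊂ ℂ² be a bounded open convex set with 0 ∈ Ω, and let r > 0. Then there exists a constant c > 0, depending only on Ω and r, such that for all continuous functions α_{jk} : closure(Ω) → ℂ (j, k ∈ {1,2}) that vanish identically on the ball B(0, r), the functions f_k(z) = Σ_{j=1}^{2} z_j ∫₀¹ t·α_{jk}(t z) dt satisfy ∫_Ω ( |f₁(z)| + |f₂(z)| ) dV(z) ≤ c · Σ_{j,k=1}^{2} ∫_Ω |α_{jk}(z)| dV(z), where dV is Lebesgue measure on ℂ² ≅ ℝ⁴. -/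
open Complex Set MeasureTheory

/-- The Rudin radial primitive `f_k(z) = Σ_j z_j ∫₀¹ t·α_{jk}(tz) dt` for `k = 1,2`,
with `coordC` the coordinates of `ℂ²`. -/
def coordC (j : Fin 2) (z : ℂ × ℂ) : ℂ := if j = 0 then z.1 else z.2

noncomputable def rudinF (α : Fin 2 → Fin 2 → ℂ × ℂ → ℂ) (k : Fin 2) (z : ℂ × ℂ) : ℂ :=
  ∑ j : Fin 2, coordC j z * ∫ t in (0 : ℝ)..1, (t : ℂ) * α j k (t • z)

/-!
On `Ω` the dilation `z ↦ t z`, `0 < t ≤ 1`, pushes Lebesgue measure forward to at most `t⁻ᵈ` times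
itself, where `d` is the real dimension. If `Ω` lies in the ball of radius `R`, then for `t < r / R`
it maps `Ω` into the ball of radius `r`, where the data vanish. Hence
`∫_Ω |a(t z)| dV(z) ≤ (R / r)ᵈ ∫_Ω |a| dV` uniformly in `t`, and Fubini's theorem bounds the
integral of `∫₀¹ t |a(t z)| dt` over `Ω`.
-/

open Module (finrank)

section Dilation

variable {E F : Type*} [NormedAddCommGroup E] [NormedSpace ℝ E] [FiniteDimensional ℝ E]
  [MeasurableSpace E] [BorelSpace E] [NormedAddCommGroup F]
  {μ : Measure E} [μ.IsAddHaarMeasure] {Ω : Set E} {a : E → F} {r R t : ℝ}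

theorem map_smul_restrict_le (hΩ : StarConvex ℝ 0 Ω) (ht : t ∈ Ioc (0 : ℝ) 1) :
    (μ.restrict Ω).map (t • ·) ≤ ENNReal.ofReal ((t ^ finrank ℝ E)⁻¹) • μ.restrict Ω := by
  have hemb : MeasurableEmbedding (t • · : E → E) := measurableEmbedding_const_smul₀ ht.1.ne'
  have hmaps : Ω ⊆ (t • ·) ⁻¹' Ω := fun z hz => hΩ.smul_mem hz ht.1.le ht.2
  calc (μ.restrict Ω).map (t • ·)
      ≤ (μ.restrict ((t • ·) ⁻¹' Ω)).map (t • ·) :=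
        Measure.map_mono (Measure.restrict_mono_set μ hmaps) hemb.measurable
    _ = (μ.map (t • ·)).restrict Ω := (hemb.restrict_map μ Ω).symm
    _ = ENNReal.ofReal ((t ^ finrank ℝ E)⁻¹) • μ.restrict Ω := by
        rw [Measure.map_addHaar_smul μ ht.1.ne', Measure.restrict_smul,
          abs_of_pos (inv_pos.2 (pow_pos ht.1 _))]

theorem quasiMeasurePreserving_smul_restrict (hΩ : StarConvex ℝ 0 Ω) (ht : t ∈ Ioc (0 : ℝ) 1) :
    Measure.QuasiMeasurePreserving (t • ·) (μ.restrict Ω) (μ.restrict Ω) :=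
  ⟨measurable_const_smul t,
    (Measure.absolutelyContinuous_of_le (map_smul_restrict_le hΩ ht)).trans
      Measure.smul_absolutelyContinuous⟩

theorem quasiMeasurePreserving_smul_prod (hΩ : StarConvex ℝ 0 Ω) :
    Measure.QuasiMeasurePreserving (fun p : E × ℝ => p.2 • p.1)
      ((μ.restrict Ω).prod (volume.restrict (Ioc 0 1))) (μ.restrict Ω) :=
  QuasiMeasurePreserving.prod_of_left (measurable_snd.smul measurable_fst) <|
    ae_restrict_of_forall_mem measurableSet_Ioc fun _ ht =>
      quasiMeasurePreserving_smul_restrict hΩ ht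

theorem integrableOn_comp_smul (hΩ : StarConvex ℝ 0 Ω) (ht : t ∈ Ioc (0 : ℝ) 1)
    (ha : IntegrableOn a Ω μ) : IntegrableOn (fun z => a (t • z)) Ω μ :=
  ((ha.smul_measure ENNReal.ofReal_ne_top).mono_measure
    (map_smul_restrict_le hΩ ht)).comp_measurable (measurable_const_smul t)

theorem setIntegral_norm_comp_smul_le (hΩ : StarConvex ℝ 0 Ω) (ht : t ∈ Ioc (0 : ℝ) 1)
    (ha : IntegrableOn a Ω μ) :
    ∫ z in Ω, ‖a (t • z)‖ ∂μ ≤ (t ^ finrank ℝ E)⁻¹ * ∫ z in Ω, ‖a z‖ ∂μ := by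
  have hle := map_smul_restrict_le (μ := μ) hΩ ht
  have hint := ha.norm.smul_measure (c := ENNReal.ofReal ((t ^ finrank ℝ E)⁻¹))
    ENNReal.ofReal_ne_top
  calc ∫ z in Ω, ‖a (t • z)‖ ∂μ
      = ∫ z, ‖a z‖ ∂(μ.restrict Ω).map (t • ·) :=
        (integral_map (measurable_const_smul t).aemeasurable
          (hint.mono_measure hle).aestronglyMeasurable).symm
    _ ≤ ∫ z, ‖a z‖ ∂(ENNReal.ofReal ((t ^ finrank ℝ E)⁻¹) • μ.restrict Ω) :=
        integral_mono_measure hle (ae_of_all _ fun _ => norm_nonneg _) hint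
    _ = (t ^ finrank ℝ E)⁻¹ * ∫ z in Ω, ‖a z‖ ∂μ := by
        rw [integral_smul_measure, ENNReal.toReal_ofReal (inv_nonneg.2 (pow_nonneg ht.1.le _)),
          smul_eq_mul]

theorem ae_comp_smul_of_ae_norm_lt {p : E → Prop} (hΩ : StarConvex ℝ 0 Ω)
    (hR : Ω ⊆ Metric.closedBall 0 R) (ht : t ∈ Ioc (0 : ℝ) 1) (htR : t * R < r)
    (hp : ∀ᵐ z ∂μ.restrict Ω, ‖z‖ < r → p z) : ∀ᵐ z ∂μ.restrict Ω, p (t • z) := by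
  have hball : ∀ᵐ z ∂μ.restrict Ω, z ∈ Metric.closedBall 0 R :=
    ae_restrict_of_ae_restrict_of_subset hR
      (ae_restrict_mem Metric.isClosed_closedBall.measurableSet)
  filter_upwards [(quasiMeasurePreserving_smul_restrict hΩ ht).ae hp, hball] with z hz hzR
  refine hz ?_
  calc ‖t • z‖ = t * ‖z‖ := norm_smul_of_nonneg ht.1.le z
    _ ≤ t * R := mul_le_mul_of_nonneg_left (mem_closedBall_zero_iff.1 hzR) ht.1.le
    _ < r := htR

theorem setIntegral_norm_comp_smul_le_of_ae_eq_zero (hΩ : StarConvex ℝ 0 Ω)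
    (hR : Ω ⊆ Metric.closedBall 0 R) (hR₀ : 0 ≤ R) (hr : 0 < r) (ht : t ∈ Ioc (0 : ℝ) 1)
    (ha : IntegrableOn a Ω μ) (ha₀ : ∀ᵐ z ∂μ.restrict Ω, ‖z‖ < r → a z = 0) :
    ∫ z in Ω, ‖a (t • z)‖ ∂μ ≤ (R / r) ^ finrank ℝ E * ∫ z in Ω, ‖a z‖ ∂μ := by
  rcases lt_or_ge (t * R) r with htR | htR
  · have hzero : ∫ z in Ω, ‖a (t • z)‖ ∂μ = 0 :=
      integral_eq_zero_of_ae <|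
        (ae_comp_smul_of_ae_norm_lt hΩ hR ht htR ha₀).mono fun z hz => norm_eq_zero.2 hz
    rw [hzero]
    positivity
  · have hinv : t⁻¹ ≤ R / r := by
      rw [inv_le_iff_one_le_mul₀ ht.1, div_mul_eq_mul_div, one_le_div hr, mul_comm]
      exact htR
    have hinv₀ : 0 ≤ t⁻¹ := inv_nonneg.2 ht.1.le
    calc ∫ z in Ω, ‖a (t • z)‖ ∂μ
        ≤ (t⁻¹) ^ finrank ℝ E * ∫ z in Ω, ‖a z‖ ∂μ := by
          simpa only [inv_pow] using setIntegral_norm_comp_smul_le hΩ ht ha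
      _ ≤ (R / r) ^ finrank ℝ E * ∫ z in Ω, ‖a z‖ ∂μ := by gcongr

end Dilation

section RadialMoment

variable {E F : Type*} [NormedAddCommGroup E] [NormedSpace ℝ E]
  [NormedAddCommGroup F] [NormedSpace ℝ F]

/-- The moment `∫₀¹ t a(t z) dt` of `a` along the segment from the origin to `z`, from which radial
primitives are built. It is `0` by convention where `t ↦ t a(t z)` is not integrable. -/
noncomputable def radialMoment (a : E → F) (z : E) : F :=
  ∫ t in Ioc (0 : ℝ) 1, t • a (t • z)

variable [MeasurableSpace E] {μ : Measure E} {Ω : Set E} {a : E → F} {K t : ℝ}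

theorem setIntegral_norm_smul_comp_smul_le (ht : t ∈ Ioc (0 : ℝ) 1)
    (hK : ∫ z in Ω, ‖a (t • z)‖ ∂μ ≤ K) : ∫ z in Ω, ‖t • a (t • z)‖ ∂μ ≤ K := by
  simp_rw [norm_smul_of_nonneg ht.1.le, integral_const_mul]
  exact (mul_le_of_le_one_left (integral_nonneg fun _ => norm_nonneg _) ht.2).trans hK

variable [FiniteDimensional ℝ E] [BorelSpace E] [μ.IsAddHaarMeasure]

theorem integrable_smul_comp_smul (hΩ : StarConvex ℝ 0 Ω) (ha : IntegrableOn a Ω μ)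
    (hK : ∀ t ∈ Ioc (0 : ℝ) 1, ∫ z in Ω, ‖a (t • z)‖ ∂μ ≤ K) :
    Integrable (fun p : E × ℝ => p.2 • a (p.2 • p.1))
      ((μ.restrict Ω).prod (volume.restrict (Ioc 0 1))) := by
  have hmeas : AEStronglyMeasurable (fun p : E × ℝ => p.2 • a (p.2 • p.1))
      ((μ.restrict Ω).prod (volume.restrict (Ioc 0 1))) :=
    measurable_snd.aestronglyMeasurable.smul
      (ha.aestronglyMeasurable.comp_quasiMeasurePreserving (quasiMeasurePreserving_smul_prod hΩ))
  refine (integrable_prod_iff' hmeas).2 ⟨?_, ?_⟩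
  · exact ae_restrict_of_forall_mem measurableSet_Ioc fun t ht =>
      (integrableOn_comp_smul hΩ ht ha).smul t
  · refine Integrable.of_bound hmeas.norm.prod_swap.integral_prod_right' K ?_
    refine ae_restrict_of_forall_mem measurableSet_Ioc fun t ht => ?_
    rw [Real.norm_of_nonneg (integral_nonneg fun _ => norm_nonneg _)]
    exact setIntegral_norm_smul_comp_smul_le ht (hK t ht)

theorem integrableOn_radialMoment (hΩ : StarConvex ℝ 0 Ω) (ha : IntegrableOn a Ω μ)
    (hK : ∀ t ∈ Ioc (0 : ℝ) 1, ∫ z in Ω, ‖a (t • z)‖ ∂μ ≤ K) :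
    IntegrableOn (radialMoment a) Ω μ :=
  (integrable_smul_comp_smul hΩ ha hK).integral_prod_left

theorem setIntegral_norm_radialMoment_le (hΩ : StarConvex ℝ 0 Ω) (ha : IntegrableOn a Ω μ)
    (hK : ∀ t ∈ Ioc (0 : ℝ) 1, ∫ z in Ω, ‖a (t • z)‖ ∂μ ≤ K) :
    ∫ z in Ω, ‖radialMoment a z‖ ∂μ ≤ K := by
  have hint := (integrable_smul_comp_smul hΩ ha hK).norm
  calc ∫ z in Ω, ‖radialMoment a z‖ ∂μ
      ≤ ∫ z in Ω, (∫ t in Ioc (0 : ℝ) 1, ‖t • a (t • z)‖) ∂μ :=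
        integral_mono (integrableOn_radialMoment hΩ ha hK).norm hint.integral_prod_left
          fun _ => norm_integral_le_integral_norm _
    _ = ∫ t in Ioc (0 : ℝ) 1, ∫ z in Ω, ‖t • a (t • z)‖ ∂μ := integral_integral_swap hint
    _ ≤ ∫ _ in Ioc (0 : ℝ) 1, K :=
        setIntegral_mono_on hint.integral_prod_right (integrable_const K) measurableSet_Ioc
          fun t ht => setIntegral_norm_smul_comp_smul_le ht (hK t ht)
    _ = K := by simp

end RadialMoment

theorem exists_pos_forall_ae_restrict_norm_le {X G ι : Type*} [PseudoMetricSpace X] [ProperSpace X]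
    [MeasurableSpace X] [OpensMeasurableSpace X] [SeminormedAddCommGroup G] [Finite ι]
    {μ : Measure X} {s : Set X} {f : ι → X → G} (hs : Bornology.IsBounded s)
    (hf : ∀ j, Continuous (f j)) : ∃ C > 0, ∀ j, ∀ᵐ x ∂μ.restrict s, ‖f j x‖ ≤ C := by
  have := Fintype.ofFinite ι
  obtain ⟨C, hC₀, hC⟩ :=
    (hs.isCompact_closure.image (continuous_pi hf)).isBounded.exists_pos_norm_le
  refine ⟨C, hC₀, fun j => ae_restrict_of_ae_restrict_of_subset subset_closure ?_⟩
  refine ae_restrict_of_forall_mem isClosed_closure.measurableSet fun x hx => ?_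
  exact (norm_le_pi_norm _ j).trans (hC _ (mem_image_of_mem _ hx))

section RadialPrimitive

variable {E F 𝕜 ι κ : Type*} [NormedAddCommGroup E] [NormedSpace ℝ E]
  [NormedAddCommGroup F] [NormedSpace ℝ F] [NormedField 𝕜] [NormedSpace 𝕜 F] [Fintype ι]

/-- The radial primitive `∑ⱼ φⱼ(z) ∫₀¹ t aⱼ(t z) dt` of the tuple `a`. Rudin's primitive is the case
in which the multipliers `φⱼ` are the complex coordinates. -/
noncomputable def radialPrimitive (φ : ι → E → 𝕜) (a : ι → E → F) (z : E) : F :=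
  ∑ j, φ j z • radialMoment (a j) z

variable [MeasurableSpace E] {μ : Measure E} {Ω : Set E} {φ : ι → E → 𝕜} {a : ι → E → F} {C r : ℝ}

theorem integrableOn_radialPrimitive (hφ : ∀ j, AEStronglyMeasurable (φ j) (μ.restrict Ω))
    (hC : ∀ j, ∀ᵐ z ∂μ.restrict Ω, ‖φ j z‖ ≤ C)
    (ha : ∀ j, IntegrableOn (radialMoment (a j)) Ω μ) :
    IntegrableOn (radialPrimitive φ a) Ω μ :=
  integrable_finsetSum _ fun j _ => (ha j).bdd_smul C (hφ j) (hC j)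

theorem setIntegral_norm_radialPrimitive_le (hC : ∀ j, ∀ᵐ z ∂μ.restrict Ω, ‖φ j z‖ ≤ C)
    (ha : ∀ j, IntegrableOn (radialMoment (a j)) Ω μ) :
    ∫ z in Ω, ‖radialPrimitive φ a z‖ ∂μ ≤ C * ∑ j, ∫ z in Ω, ‖radialMoment (a j) z‖ ∂μ := by
  rw [← integral_finsetSum _ fun j _ => (ha j).norm, ← integral_const_mul]
  refine integral_mono_of_nonneg (ae_of_all _ fun _ => norm_nonneg _)
    ((integrable_finsetSum _ fun j _ => (ha j).norm).const_mul C) ?_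
  filter_upwards [ae_all_iff.2 hC] with z hz
  rw [Finset.mul_sum]
  refine norm_sum_le_of_le _ fun j _ => ?_
  rw [norm_smul]
  exact mul_le_mul_of_nonneg_right (hz j) (norm_nonneg _)

variable [FiniteDimensional ℝ E] [BorelSpace E] [μ.IsAddHaarMeasure] [Fintype κ]

theorem stmt12_general [CompleteSpace F] (hΩ : StarConvex ℝ 0 Ω) (hbdd : Bornology.IsBounded Ω)
    (hr : 0 < r) (hφ : ∀ j, Continuous (φ j)) :
    ∃ c > (0 : ℝ), ∀ α : ι → κ → E → F,
      (∀ j k, IntegrableOn (α j k) Ω μ) →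
      (∀ j k, ∀ᵐ z ∂μ.restrict Ω, ‖z‖ < r → α j k z = 0) →
      (∀ k, IntegrableOn (radialPrimitive φ (α · k)) Ω μ) ∧
      ∫ z in Ω, ∑ k, ‖radialPrimitive φ (α · k) z‖ ∂μ ≤
        c * ∑ j, ∑ k, ∫ z in Ω, ‖α j k z‖ ∂μ := by
  obtain ⟨R, hR, hΩR⟩ := hbdd.subset_closedBall_lt 0 0
  obtain ⟨C, hC, hφC⟩ := exists_pos_forall_ae_restrict_norm_le (μ := μ) hbdd hφ
  set K := (R / r) ^ finrank ℝ E
  refine ⟨C * K, by positivity, fun α hα hα₀ => ?_⟩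
  have hK : ∀ j k, ∀ t ∈ Ioc (0 : ℝ) 1,
      ∫ z in Ω, ‖α j k (t • z)‖ ∂μ ≤ K * ∫ z in Ω, ‖α j k z‖ ∂μ := fun j k t ht =>
    setIntegral_norm_comp_smul_le_of_ae_eq_zero hΩ hΩR hR.le hr ht (hα j k) (hα₀ j k)
  have hmoment : ∀ j k, IntegrableOn (radialMoment (α j k)) Ω μ := fun j k =>
    integrableOn_radialMoment hΩ (hα j k) (hK j k)
  have hprim : ∀ k, IntegrableOn (radialPrimitive φ (α · k)) Ω μ := fun k =>
    integrableOn_radialPrimitive (fun j => (hφ j).aestronglyMeasurable) hφC (hmoment · k)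
  refine ⟨hprim, ?_⟩
  calc ∫ z in Ω, ∑ k, ‖radialPrimitive φ (α · k) z‖ ∂μ
      = ∑ k, ∫ z in Ω, ‖radialPrimitive φ (α · k) z‖ ∂μ :=
        integral_finsetSum _ fun k _ => (hprim k).norm
    _ ≤ ∑ k, C * ∑ j, ∫ z in Ω, ‖radialMoment (α j k) z‖ ∂μ :=
        Finset.sum_le_sum fun k _ => setIntegral_norm_radialPrimitive_le hφC (hmoment · k)
    _ ≤ ∑ k, C * ∑ j, K * ∫ z in Ω, ‖α j k z‖ ∂μ := by
        gcongr with k _ j _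
        exact setIntegral_norm_radialMoment_le hΩ (hα j k) (hK j k)
    _ = C * K * ∑ j, ∑ k, ∫ z in Ω, ‖α j k z‖ ∂μ := by
        simp_rw [← Finset.mul_sum, ← mul_assoc]
        rw [Finset.sum_comm]

end RadialPrimitive

theorem integrableOn_of_continuousOn_closure {X G : Type*} [PseudoMetricSpace X] [ProperSpace X]
    [MeasurableSpace X] [OpensMeasurableSpace X] [NormedAddCommGroup G] {μ : Measure X}
    [IsFiniteMeasureOnCompacts μ] {s : Set X} {f : X → G} (hs : Bornology.IsBounded s)
    (hf : ContinuousOn f (closure s)) : IntegrableOn f s μ :=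
  (hf.integrableOn_compact' hs.isCompact_closure isClosed_closure.measurableSet).mono_set
    subset_closure

instance isAddHaarMeasure_volume_prod_complex : (volume : Measure (ℂ × ℂ)).IsAddHaarMeasure :=
  Measure.prod.instIsAddHaarMeasure _ _

theorem continuous_coordC (j : Fin 2) : Continuous (coordC j) := by
  unfold coordC
  split_ifs <;> fun_prop

theorem rudinF_eq_radialPrimitive (α : Fin 2 → Fin 2 → ℂ × ℂ → ℂ) (k : Fin 2) :
    rudinF α k = radialPrimitive coordC (α · k) := by
  funext z
  simp only [rudinF, radialPrimitive, radialMoment, Complex.real_smul, smul_eq_mul,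
    intervalIntegral.integral_of_le zero_le_one]

/-- on a bounded open convex `Ω ∋ 0` and for `r > 0` there is `c > 0`
such that for all continuous data `α_{jk}` on `closure Ω` vanishing on `B(0,r)`,
`∫_Ω (|f₁| + |f₂|) dV ≤ c Σ_{j,k} ∫_Ω |α_{jk}| dV`. -/
theorem stmt12 (Ω : Set (ℂ × ℂ)) (hopen : IsOpen Ω) (hconv : Convex ℝ Ω)
    (hbdd : Bornology.IsBounded Ω) (h0 : (0 : ℂ × ℂ) ∈ Ω) (r : ℝ) (hr : 0 < r) :
    ∃ c > (0 : ℝ), ∀ α : Fin 2 → Fin 2 → ℂ × ℂ → ℂ,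
      (∀ j k : Fin 2, ContinuousOn (α j k) (closure Ω)) →
      (∀ j k : Fin 2, ∀ z ∈ Metric.ball (0 : ℂ × ℂ) r, α j k z = 0) →
      ∫ z in Ω, (‖rudinF α 0 z‖ + ‖rudinF α 1 z‖) ≤
        c * ∑ j : Fin 2, ∑ k : Fin 2, ∫ z in Ω, ‖α j k z‖ := by
  obtain ⟨c, hc, hle⟩ := stmt12_general (μ := volume) (κ := Fin 2) (F := ℂ)
    (hconv.starConvex h0) hbdd hr continuous_coordC
  exact ⟨c, hc, fun α hα hα₀ => by
    simpa only [Fin.sum_univ_two, rudinF_eq_radialPrimitive] using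
      (hle α (fun j k => integrableOn_of_continuousOn_closure hbdd (hα j k))
        fun j k => ae_of_all _ fun z hz => hα₀ j k z (mem_ball_zero_iff.2 hz)).2⟩
end
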